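/- arXiv:1401.3026 — 2 statements merged into one kernel-verified Lean document; each statement's English description precedes it below -/
import Mathlib

section
/- Let n ≥ 1 and let μ be a Borel probability measure on the space of real n×n matrices with bounded support, such that (A2) the support of μ leaves some proper cone K ⊆ ℝⁿ invariant, and (A3) the singular part of μ with respect to Lebesgue measure on ℝ^{n×n} is either zero or a finite linear combination of Dirac measures. Then the joint spectral radius of the support of μ equals the limit as p → ∞ (over positive integers p) of the p-radius of μ: ρ̂(supp μ) = lim_{p→∞} ρ_{p,μ}. -/
open MeasureTheory Filter Topology
open scoped ENNReal RealInnerProductSpace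

noncomputable section

/-- The space of real `n × n` matrices. -/
abbrev Mat (n : ℕ) := Matrix (Fin n) (Fin n) ℝ

/-- Euclidean space `ℝⁿ`. -/
abbrev EucSp (n : ℕ) := EuclideanSpace ℝ (Fin n)

/-- The (Borel = product) measurable structure on `n × n` real matrices. -/
instance matMeasurableSpace (n : ℕ) : MeasurableSpace (Mat n) :=
  inferInstanceAs (MeasurableSpace (Fin n → Fin n → ℝ))

/-- Lebesgue measure on the space of `n × n` real matrices `≅ ℝ^{n²}`. -/
def matLebesgue (n : ℕ) : Measure (Mat n) :=
  (inferInstance : MeasureSpace (Fin n → Fin n → ℝ)).volume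

/-- The operator norm (maximal singular value) of a real square matrix, induced by the
Euclidean norm. -/
def opNorm {m : ℕ} (A : Matrix (Fin m) (Fin m) ℝ) : ℝ :=
  ‖LinearMap.toContinuousLinearMap (Matrix.toEuclideanLin A)‖

/-- The product `A_k ⋯ A_1` of the matrices `f 0 = A_1, …, f (k-1) = A_k` (decreasing order of
indices). -/
def prodRev {m k : ℕ} (f : Fin k → Matrix (Fin m) (Fin m) ℝ) : Matrix (Fin m) (Fin m) ℝ :=
  ((List.ofFn f).reverse).prod

/-- The joint spectral radius of a set of matrices:
`ρ̂(M) = limsup_{k→∞} sup_{A₁,…,A_k ∈ M} ‖A_k ⋯ A₁‖^(1/k)`. -/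
def jsr {m : ℕ} (M : Set (Matrix (Fin m) (Fin m) ℝ)) : ℝ :=
  limsup (fun k : ℕ =>
    sSup {x : ℝ | ∃ f : Fin k → Matrix (Fin m) (Fin m) ℝ,
      (∀ i, f i ∈ M) ∧ x = opNorm (prodRev f)} ^ ((1 : ℝ) / k)) atTop

/-- `E[‖A_k ⋯ A₁‖^p]` where `A₁, …, A_k` are i.i.d. with law `μ`. -/
def kExpNorm {m : ℕ} (μ : Measure (Mat m)) (p k : ℕ) : ℝ :=
  ∫ f : Fin k → Mat m, opNorm (prodRev f) ^ p ∂(Measure.pi fun _ => μ)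

/-- The `L^p`-norm joint spectral radius (`p`-radius) of a probability distribution `μ`:
`ρ_{p,μ} = lim_{k→∞} (E[‖A_k ⋯ A₁‖^p])^{1/(pk)}`; since this limit exists for distributions
with bounded support, it coincides with the `limsup` used here. -/
def pRadius {m : ℕ} (μ : Measure (Mat m)) (p : ℕ) : ℝ :=
  limsup (fun k : ℕ => kExpNorm μ p k ^ (1 / (p * k : ℝ))) atTop

/-- The (topological) support of a measure on matrices. -/
def msupport {m : ℕ} (μ : Measure (Mat m)) : Set (Mat m) :=
  {A | ∀ ε : ℝ, 0 < ε → μ {B | opNorm (B - A) < ε} ≠ 0}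

/-- `μ` has bounded support. -/
def HasBoundedSupport {m : ℕ} (μ : Measure (Mat m)) : Prop :=
  ∃ C : ℝ, ∀ A ∈ msupport μ, opNorm A ≤ C

/-- A proper cone of `ℝⁿ`: a closed convex pointed cone with nonempty interior. -/
structure IsProperCone {m : ℕ} (K : Set (EucSp m)) : Prop where
  isClosed : IsClosed K
  convex : Convex ℝ K
  smul_mem : ∀ c : ℝ, 0 ≤ c → ∀ x ∈ K, c • x ∈ K
  pointed : ∀ x ∈ K, -x ∈ K → x = 0
  solid : (interior K).Nonempty

/-- A matrix `A` leaves a cone `K` invariant: `A K ⊆ K`. -/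
def LeavesInv {m : ℕ} (A : Matrix (Fin m) (Fin m) ℝ) (K : Set (EucSp m)) : Prop :=
  ∀ x ∈ K, Matrix.toEuclideanLin A x ∈ K

/-- A set of matrices leaves a cone invariant if each of its members does. -/
def SetLeavesInv {m : ℕ} (S : Set (Matrix (Fin m) (Fin m) ℝ)) (K : Set (EucSp m)) : Prop :=
  ∀ A ∈ S, LeavesInv A K

/-- `π(K)`: the set of matrices leaving the cone `K` invariant. -/
def piCone {m : ℕ} (K : Set (EucSp m)) : Set (Mat m) := {A | LeavesInv A K}

/-- Distance (valued in `ℝ≥0∞`, with `d(A, ∅) = ∞`) from a matrix to a set of matrices, in the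
operator norm. -/
def edistSet {m : ℕ} (A : Mat m) (S : Set (Mat m)) : ℝ≥0∞ :=
  ⨅ B ∈ S, ENNReal.ofReal (opNorm (A - B))

/-- Hausdorff distance between two sets of matrices (operator norm, valued in `ℝ≥0∞`). -/
def hausdorffDistE {m : ℕ} (S T : Set (Mat m)) : ℝ≥0∞ :=
  max (⨆ A ∈ S, edistSet A T) (⨆ B ∈ T, edistSet B S)

/-- `S_M = {A : A − M leaves K invariant}`, i.e. `{A : A ≥^K M}`. -/
def matSSet {m : ℕ} (K : Set (EucSp m)) (M : Mat m) : Set (Mat m) :=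
  {A | LeavesInv (A - M) K}

/-- `π_r = {M ∈ π(K) : d(M, ∂π(K)) ≥ r}`. -/
def piConeR {m : ℕ} (K : Set (EucSp m)) (r : ℝ) : Set (Mat m) :=
  {M | M ∈ piCone K ∧ ENNReal.ofReal r ≤ edistSet M (frontier (piCone K))}

/-- `M_r = (π_r ∩ supp μ_c) ∪ supp μ_s`. -/
def MrSet {m : ℕ} (K : Set (EucSp m)) (μc μs : Measure (Mat m)) (r : ℝ) : Set (Mat m) :=
  (piConeR K r ∩ msupport μc) ∪ msupport μs

/-- The measure `ν` is zero or a finite linear combination (with positive coefficients) of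
Dirac measures. -/
def IsFiniteDiracComb {m : ℕ} (ν : Measure (Mat m)) : Prop :=
  ν = 0 ∨ ∃ (N : ℕ) (w : Fin N → ℝ) (Ms : Fin N → Mat m),
    (∀ i, 0 < w i) ∧ ν = ∑ i, ENNReal.ofReal (w i) • Measure.dirac (Ms i)

/-- The `p`-th Kronecker power of a square matrix (with `A^{⊗0} = 1`, `A^{⊗(p+1)} = A^{⊗p} ⊗ A`). -/
def kronPow {m : ℕ} (A : Matrix (Fin m) (Fin m) ℝ) :
    (p : ℕ) → Matrix (Fin (m ^ p)) (Fin (m ^ p)) ℝ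
  | 0 => 1
  | p + 1 =>
    Matrix.reindex (finProdFinEquiv.trans (finCongr (pow_succ m p).symm))
      (finProdFinEquiv.trans (finCongr (pow_succ m p).symm))
      (Matrix.kroneckerMap (· * ·) (kronPow A p) A)

/-- The `q`-th Kronecker power of a vector. -/
def vecKronPow {m : ℕ} (x : EucSp m) : (q : ℕ) → EucSp (m ^ q)
  | 0 => WithLp.toLp 2 fun _ => 1
  | q + 1 => WithLp.toLp 2 fun i =>
      vecKronPow x q (finProdFinEquiv.symm (finCongr (pow_succ m q) i)).1 *
        x (finProdFinEquiv.symm (finCongr (pow_succ m q) i)).2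

/-- The spectral radius of a real square matrix: the largest modulus of a complex eigenvalue. -/
def specRad {m : ℕ} (A : Matrix (Fin m) (Fin m) ℝ) : ℝ :=
  sSup ((fun z : ℂ => ‖z‖) '' spectrum ℂ (A.map Complex.ofReal))

/-- The entrywise expectation `E[A^{⊗p}]` of the `p`-th Kronecker power under `μ`. -/
def kronExp {m : ℕ} (μ : Measure (Mat m)) (p : ℕ) :
    Matrix (Fin (m ^ p)) (Fin (m ^ p)) ℝ :=
  Matrix.of fun i j => ∫ A, kronPow A p i j ∂μ

/-- `V` is a stochastic Lyapunov function for `μ` of degree `p` with growth rate `γ`. -/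
def IsStochLyap {m : ℕ} (μ : Measure (Mat m)) (p : ℕ) (γ : ℝ) (V : EucSp m → ℝ) : Prop :=
  (∃ C₁ : ℝ, 0 < C₁ ∧ ∃ C₂ : ℝ, 0 < C₂ ∧
    ∀ x : EucSp m, C₁ * ‖x‖ ^ p ≤ V x ∧ V x ≤ C₂ * ‖x‖ ^ p) ∧
  ∀ x : EucSp m, (∫ A, V (Matrix.toEuclideanLin A x) ∂μ) ≤ γ ^ p * V x

/-- `ν` is a norm on `ℝ^m`. -/
def IsNormFn {m : ℕ} (ν : EucSp m → ℝ) : Prop :=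
  (∀ x, 0 ≤ ν x) ∧ (∀ x, ν x = 0 ↔ x = 0) ∧
  (∀ (a : ℝ) (x : EucSp m), ν (a • x) = |a| * ν x) ∧
  (∀ x y : EucSp m, ν (x + y) ≤ ν x + ν y)

/-- `ν` is cone absolute with respect to `K`:
`ν x = inf {ν (v + w) : v, w ∈ K, x = v − w}`. -/
def IsConeAbsolute {m : ℕ} (K : Set (EucSp m)) (ν : EucSp m → ℝ) : Prop :=
  ∀ x : EucSp m, ν x = sInf {r : ℝ | ∃ v ∈ K, ∃ w ∈ K, x = v - w ∧ r = ν (v + w)}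

/-- The dual cone `K* = {f : fᵀx ≥ 0 for all x ∈ K}`. -/
def dualConeSet {m : ℕ} (K : Set (EucSp m)) : Set (EucSp m) :=
  {f | ∀ x ∈ K, 0 ≤ ⟪f, x⟫}

/-- `ν` is cone linear with respect to `K`: `ν = ⟪f, ·⟫` on `K` for some `f ∈ K*`. -/
def IsConeLinear {m : ℕ} (K : Set (EucSp m)) (ν : EucSp m → ℝ) : Prop :=
  ∃ f ∈ dualConeSet K, ∀ x ∈ K, ν x = ⟪f, x⟫

/-- The matrix norm induced by a norm `ν` on `ℝ^m`. -/
def inducedNormFn {m : ℕ} (ν : EucSp m → ℝ) (A : Matrix (Fin m) (Fin m) ℝ) : ℝ :=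
  sSup {c : ℝ | ∃ x : EucSp m, x ≠ 0 ∧ c = ν (Matrix.toEuclideanLin A x) / ν x}

/-!
Let `W > 1`. By finite dimensionality and compactness, every point `x` of the support of `μ` is
*exactly* a weighted mean `x = ∫ h(y) y dμ(y)`, where the signed weight `h` has `L¹`-norm at most
`W` and is bounded by a constant `H` independent of `x`. Substituting this for one factor of a
product and applying Hölder's inequality gives `‖a x b‖^p ≤ W^p H ∫ ‖a y b‖^p dμ(y)`. Doing so for
all `k` factors bounds the norm of any product of `k` matrices of the support by
`(W H^(1/p))^k E[‖A_k ⋯ A_1‖^p]^(1/p)`, so the joint spectral radius is at most `W H^(1/p)` times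
the `p`-radius. Since `H` does not depend on `p`, this factor tends to `W`, which is arbitrarily
close to `1`.
-/

open scoped BoundedContinuousFunction Matrix.Norms.L2Operator NNReal

section WeightedMean

theorem exists_boundedContinuous_integral_eq_one {X : Type*} [PseudoMetricSpace X]
    [MeasurableSpace X] [OpensMeasurableSpace X] {μ : Measure X} [IsFiniteMeasure μ] {x : X}
    (hx : x ∈ μ.support) {ε : ℝ} (hε : 0 < ε) :
    ∃ h : X →ᵇ ℝ, (∀ y, 0 ≤ h y) ∧ (∀ y, y ∉ Metric.ball x ε → h y = 0) ∧ ∫ y, h y ∂μ = 1 := by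
  let φ : X →ᵇ ℝ := .ofNormedAddCommGroup (fun y => max 0 (ε - dist y x)) (by fun_prop) ε
    fun y => by
      rw [Real.norm_of_nonneg (le_max_left _ _)]
      exact max_le hε.le (sub_le_self _ dist_nonneg)
  have hφ : ∀ y, φ y = max 0 (ε - dist y x) := fun _ => rfl
  have hφ_nonneg : ∀ y, 0 ≤ φ y := fun y => le_max_left _ _
  have hsupport : Function.support φ = Metric.ball x ε := by
    ext y
    simp [hφ]
  have hpos : 0 < ∫ y, φ y ∂μ := by
    rw [integral_pos_iff_support_of_nonneg hφ_nonneg (φ.integrable μ), hsupport]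
    exact (Measure.mem_support_iff_forall x).1 hx _ (Metric.ball_mem_nhds x hε)
  refine ⟨(∫ y, φ y ∂μ)⁻¹ • φ, fun y => ?_, fun y hy => ?_, ?_⟩
  · exact mul_nonneg (inv_nonneg.2 hpos.le) (hφ_nonneg y)
  · rw [← hsupport, Function.notMem_support] at hy
    simp [hy]
  · simp only [BoundedContinuousFunction.smul_apply, smul_eq_mul]
    rw [integral_const_mul, inv_mul_cancel₀ hpos.ne']

theorem integral_abs_add_le {X : Type*} [TopologicalSpace X] [MeasurableSpace X]
    [OpensMeasurableSpace X] {μ : Measure X} [IsFiniteMeasure μ] (h g : X →ᵇ ℝ) :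
    ∫ x, |(h + g) x| ∂μ ≤ ∫ x, |h x| ∂μ + ‖g‖ * μ.real Set.univ :=
  calc ∫ x, |(h + g) x| ∂μ ≤ ∫ x, (|h x| + ‖g‖) ∂μ :=
        integral_mono ((h + g).integrable μ).abs
          ((h.integrable μ).abs.add (integrable_const _)) fun x =>
          (abs_add_le _ _).trans (add_le_add_right (g.norm_coe_le_norm x) _)
    _ = ∫ x, |h x| ∂μ + ‖g‖ * μ.real Set.univ := by
        rw [integral_add (h.integrable μ).abs (integrable_const _), integral_const, smul_eq_mul,
          mul_comm]

theorem exists_norm_preimage_le_of_mem_range {V F : Type*} [NormedAddCommGroup V] [NormedSpace ℝ V]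
    [NormedAddCommGroup F] [NormedSpace ℝ F] [FiniteDimensional ℝ F] (T : V →ₗ[ℝ] F) :
    ∃ c : ℝ, 0 < c ∧ ∀ y ∈ LinearMap.range T, ∃ x, T x = y ∧ ‖x‖ ≤ c * ‖y‖ := by
  obtain ⟨S, hS⟩ := T.rangeRestrict.exists_rightInverse_of_surjective T.range_rangeRestrict
  refine ⟨‖S.toContinuousLinearMap‖ + 1, by positivity, fun y hy => ⟨S ⟨y, hy⟩, ?_, ?_⟩⟩
  · exact congrArg Subtype.val (LinearMap.congr_fun hS ⟨y, hy⟩)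
  · exact (S.toContinuousLinearMap.le_opNorm ⟨y, hy⟩).trans
      (mul_le_mul_of_nonneg_right (by simp) (norm_nonneg y))

variable {E : Type*} [NormedAddCommGroup E] [NormedSpace ℝ E] [MeasurableSpace E] [BorelSpace E]
  {μ : Measure E}

theorem integrable_boundedContinuous_smul [SecondCountableTopology E]
    (hμ : Integrable id μ) (h : E →ᵇ ℝ) :
    Integrable (fun x => h x • x) μ :=
  hμ.bdd_smul ‖h‖ h.continuous.aestronglyMeasurable (Eventually.of_forall h.norm_coe_le_norm)

/-- The mean `∫ h(x) x dμ(x)` of the measure `μ` reweighted by a bounded continuous signed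
weight `h`. It is bundled as a linear map on all signed weights, and `h` is not normalized, so
that its range is a subspace and small errors in it can be corrected by small weights. -/
def weightedMean [SecondCountableTopology E] (hμ : Integrable id μ) : (E →ᵇ ℝ) →ₗ[ℝ] E where
  toFun h := ∫ x, h x • x ∂μ
  map_add' g h := by
    simp only [BoundedContinuousFunction.add_apply, add_smul]
    exact integral_add (integrable_boundedContinuous_smul hμ g)
      (integrable_boundedContinuous_smul hμ h)
  map_smul' c h := by
    simp only [BoundedContinuousFunction.smul_apply, smul_assoc, RingHom.id_apply]
    exact integral_smul c _

theorem weightedMean_apply [SecondCountableTopology E] (hμ : Integrable id μ) (h : E →ᵇ ℝ) :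
    weightedMean hμ h = ∫ x, h x • x ∂μ := rfl

variable [IsFiniteMeasure μ] [FiniteDimensional ℝ E]

theorem exists_norm_weightedMean_sub_le (hμ : Integrable id μ) {x : E} (hx : x ∈ μ.support)
    {ε : ℝ} (hε : 0 < ε) :
    ∃ h : E →ᵇ ℝ, ∫ y, |h y| ∂μ = 1 ∧ ‖weightedMean hμ h - x‖ ≤ ε := by
  obtain ⟨h, h_nonneg, h_zero, h_one⟩ := exists_boundedContinuous_integral_eq_one hx hε
  have hsub : weightedMean hμ h - x = ∫ y, h y • (y - x) ∂μ := by
    simp only [smul_sub]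
    rw [integral_sub (integrable_boundedContinuous_smul hμ h) ((h.integrable μ).smul_const x),
      integral_smul_const, h_one, one_smul, weightedMean_apply]
  have hbound : ∀ y, ‖h y • (y - x)‖ ≤ h y * ε := fun y => by
    rw [norm_smul, Real.norm_of_nonneg (h_nonneg y)]
    by_cases hy : y ∈ Metric.ball x ε
    · exact mul_le_mul_of_nonneg_left (mem_ball_iff_norm.1 hy).le (h_nonneg y)
    · simp [h_zero y hy]
  refine ⟨h, by simpa only [abs_of_nonneg (h_nonneg _)] using h_one, ?_⟩
  calc ‖weightedMean hμ h - x‖ ≤ ∫ y, h y * ε ∂μ := by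
        rw [hsub]
        exact norm_integral_le_of_norm_le ((h.integrable μ).mul_const ε)
          (Eventually.of_forall hbound)
    _ = ε := by rw [integral_mul_const, h_one, one_mul]

theorem support_subset_range_weightedMean (hμ : Integrable id μ) :
    μ.support ⊆ LinearMap.range (weightedMean hμ) := by
  intro x hx
  rw [← (Submodule.closed_of_finiteDimensional (LinearMap.range (weightedMean hμ))).closure_eq,
    Metric.mem_closure_iff]
  intro ε hε
  obtain ⟨h, -, hle⟩ := exists_norm_weightedMean_sub_le hμ hx (half_pos hε)
  exact ⟨_, ⟨h, rfl⟩, by rw [dist_comm, dist_eq_norm]; linarith⟩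

theorem exists_nhds_weight (hμ : Integrable id μ) {x : E} (hx : x ∈ μ.support) {ε : ℝ}
    (hε : 0 < ε) :
    ∃ U ∈ 𝓝 x, ∃ H : ℝ, ∀ y ∈ U ∩ μ.support, ∃ h : E →ᵇ ℝ,
      weightedMean hμ h = y ∧ ∫ z, |h z| ∂μ ≤ 1 + ε ∧ ‖h‖ ≤ H := by
  obtain ⟨c, hc, hlift⟩ := exists_norm_preimage_le_of_mem_range (weightedMean hμ)
  let m := μ.real Set.univ
  obtain ⟨η, hη, hηε⟩ : ∃ η : ℝ, 0 < η ∧ c * (2 * η) * m ≤ ε := by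
    refine ⟨ε / (2 * c * (m + 1)), by positivity, ?_⟩
    rw [show c * (2 * (ε / (2 * c * (m + 1)))) * m = ε * (m / (m + 1)) by field_simp]
    exact mul_le_of_le_one_right hε.le ((div_le_one (by positivity)).2 (by linarith))
  -- One weight `h` has mean close to `x`; for each nearby `y` the error `y - weightedMean hμ h` is
  -- corrected by a weight `g` of norm `O(η)`, so that `h + g` is bounded uniformly in `y`.
  obtain ⟨h, hone, hmean⟩ := exists_norm_weightedMean_sub_le hμ hx hη
  refine ⟨Metric.ball x η, Metric.ball_mem_nhds x hη, ‖h‖ + c * (2 * η), ?_⟩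
  rintro y ⟨hyx, hy⟩
  have hclose : ‖y - weightedMean hμ h‖ ≤ 2 * η := by
    rw [mem_ball_iff_norm] at hyx
    rw [norm_sub_rev] at hmean
    linarith [norm_sub_le_norm_sub_add_norm_sub y x (weightedMean hμ h)]
  obtain ⟨g, hg, hgle⟩ :=
    hlift _ (sub_mem (support_subset_range_weightedMean hμ hy) (LinearMap.mem_range_self _ h))
  have hg_sup : ‖g‖ ≤ c * (2 * η) := hgle.trans (mul_le_mul_of_nonneg_left hclose hc.le)
  refine ⟨h + g, by rw [map_add, hg, add_sub_cancel], ?_, (norm_add_le _ _).trans (by gcongr)⟩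
  calc ∫ z, |(h + g) z| ∂μ ≤ ∫ z, |h z| ∂μ + ‖g‖ * m := integral_abs_add_le h g
    _ ≤ 1 + c * (2 * η) * m := by rw [hone]; gcongr
    _ ≤ 1 + ε := by gcongr

theorem exists_weight_of_isCompact (hμ : Integrable id μ) {s : Set E} (hs : IsCompact s)
    (hsμ : s ⊆ μ.support) {ε : ℝ} (hε : 0 < ε) :
    ∃ H : ℝ, ∀ x ∈ s, ∃ h : E →ᵇ ℝ,
      weightedMean hμ h = x ∧ ∫ y, |h y| ∂μ ≤ 1 + ε ∧ ‖h‖ ≤ H := by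
  choose! U hU H hH using fun x (hx : x ∈ s) => exists_nhds_weight hμ (hsμ hx) hε
  obtain ⟨t, hts, ht⟩ := hs.elim_nhds_subcover U hU
  obtain ⟨M, hM⟩ := (t.image H).bddAbove
  refine ⟨M, fun x hx => ?_⟩
  obtain ⟨y, hy, hxy⟩ := Set.mem_iUnion₂.1 (ht hx)
  obtain ⟨h, hmean, hone, hsup⟩ := hH y (hts y hy) x ⟨hxy, hsμ hx⟩
  exact ⟨h, hmean, hone, hsup.trans (hM (Finset.mem_coe.2 (Finset.mem_image_of_mem H hy)))⟩

end WeightedMean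

section Moments

theorem pow_lintegral_mul_le {α : Type*} [MeasurableSpace α] {μ : Measure α} {w g : α → ℝ≥0∞}
    (hw : AEMeasurable w μ) (hg : AEMeasurable g μ) (p : ℕ) :
    (∫⁻ x, w x * g x ∂μ) ^ (p + 1) ≤ (∫⁻ x, w x ∂μ) ^ p * ∫⁻ x, w x * g x ^ (p + 1) ∂μ := by
  obtain ⟨s, t, hs, ht, hst, hsp, htp⟩ : ∃ s t : ℝ, 0 ≤ s ∧ 0 ≤ t ∧ s + t = 1 ∧
      s * (p + 1 : ℕ) = p ∧ t * (p + 1 : ℕ) = 1 := by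
    refine ⟨p / (p + 1), 1 / (p + 1), by positivity, by positivity, ?_, ?_, ?_⟩ <;>
      push_cast <;> field_simp
  have hsplit (x : α) : w x * g x = w x ^ s * (w x * g x ^ (p + 1)) ^ t := by
    rw [ENNReal.mul_rpow_of_nonneg _ _ ht, ← mul_assoc, ← ENNReal.rpow_add_of_nonneg _ _ hs ht,
      hst, ENNReal.rpow_one, ← ENNReal.rpow_natCast_mul, mul_comm _ t, htp, ENNReal.rpow_one]
  calc (∫⁻ x, w x * g x ∂μ) ^ (p + 1)
      ≤ ((∫⁻ x, w x ∂μ) ^ s * (∫⁻ x, w x * g x ^ (p + 1) ∂μ) ^ t) ^ (p + 1) := by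
        simp only [hsplit]
        gcongr
        exact ENNReal.lintegral_mul_norm_pow_le hw (hw.mul (hg.pow_const _)) hs ht hst
    _ = (∫⁻ x, w x ∂μ) ^ p * ∫⁻ x, w x * g x ^ (p + 1) ∂μ := by
        rw [mul_pow, ← ENNReal.rpow_mul_natCast, ← ENNReal.rpow_mul_natCast, hsp, htp,
          ENNReal.rpow_natCast, ENNReal.rpow_one]

theorem lintegral_pi_fin_succ {α : Type*} [MeasurableSpace α] (μ : Measure α) [SigmaFinite μ]
    {k : ℕ} {g : (Fin (k + 1) → α) → ℝ≥0∞} (hg : Measurable g) :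
    ∫⁻ f, g f ∂(Measure.pi fun _ => μ) =
      ∫⁻ f : Fin k → α, ∫⁻ x, g (Fin.cons x f) ∂μ ∂(Measure.pi fun _ => μ) := by
  have e := (measurePreserving_piFinSuccAbove (fun _ : Fin (k + 1) => μ) 0).symm
  rw [← e.lintegral_comp hg, lintegral_prod_symm]
  · simp [MeasurableEquiv.piFinSuccAbove_symm_apply, Fin.consEquiv]
  · exact (hg.comp e.measurable).aemeasurable

variable {R : Type*} [NormedRing R] [NormedAlgebra ℝ R] [MeasurableSpace R] [BorelSpace R]
  {μ : Measure R}

theorem enorm_mul_integral_smul_mul_pow_le {h : R → ℝ} (hmeas : AEMeasurable h μ)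
    (hint : Integrable (fun x => h x • x) μ) {W H : ℝ≥0∞} (hW : ∫⁻ x, ‖h x‖ₑ ∂μ ≤ W)
    (hH : ∀ x, ‖h x‖ₑ ≤ H) (p : ℕ) (a b : R) :
    ‖a * (∫ x, h x • x ∂μ) * b‖ₑ ^ (p + 1) ≤ W ^ p * H * ∫⁻ x, ‖a * x * b‖ₑ ^ (p + 1) ∂μ := by
  have hcont : Continuous fun x : R => ‖a * x * b‖ₑ := by fun_prop
  have hpull : a * (∫ x, h x • x ∂μ) * b = ∫ x, h x • (a * x * b) ∂μ := by
    rw [← integral_const_mul_of_integrable hint,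
      ← integral_mul_const_of_integrable (hint.const_mul a)]
    simp only [mul_smul_comm, smul_mul_assoc]
  calc ‖a * (∫ x, h x • x ∂μ) * b‖ₑ ^ (p + 1)
      ≤ (∫⁻ x, ‖h x‖ₑ * ‖a * x * b‖ₑ ∂μ) ^ (p + 1) := by
        rw [hpull]
        gcongr
        simpa only [enorm_smul] using
          enorm_integral_le_lintegral_enorm (μ := μ) fun x => h x • (a * x * b)
    _ ≤ (∫⁻ x, ‖h x‖ₑ ∂μ) ^ p * ∫⁻ x, ‖h x‖ₑ * ‖a * x * b‖ₑ ^ (p + 1) ∂μ :=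
        pow_lintegral_mul_le hmeas.enorm hcont.measurable.aemeasurable p
    _ ≤ W ^ p * ∫⁻ x, H * ‖a * x * b‖ₑ ^ (p + 1) ∂μ := by gcongr; exact hH _
    _ = W ^ p * H * ∫⁻ x, ‖a * x * b‖ₑ ^ (p + 1) ∂μ := by
        rw [lintegral_const_mul _ (hcont.measurable.pow_const _), mul_assoc]

end Moments

section Products

theorem prod_reverse_ofFn_succ {M : Type*} [Monoid M] {k : ℕ} (f : Fin (k + 1) → M) :
    (List.ofFn f).reverse.prod = (List.ofFn fun i => f i.succ).reverse.prod * f 0 := by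
  simp [List.ofFn_succ]

theorem continuous_prod_reverse_ofFn {M : Type*} [TopologicalSpace M] [Monoid M]
    [ContinuousMul M] (k : ℕ) : Continuous fun f : Fin k → M => (List.ofFn f).reverse.prod := by
  induction k with
  | zero => exact continuous_of_discreteTopology
  | succ k ih =>
    simp only [prod_reverse_ofFn_succ]
    exact (ih.comp (by fun_prop)).mul (continuous_apply 0)

variable {R : Type*} [NormedRing R] [MeasurableSpace R] [BorelSpace R]
  [SecondCountableTopology R] {μ : Measure R} [SigmaFinite μ]

theorem enorm_prod_mul_pow_le_lintegral {c : ℝ≥0∞} {p k : ℕ} {B : Fin k → R}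
    (hB : ∀ i a b, ‖a * B i * b‖ₑ ^ p ≤ c * ∫⁻ x, ‖a * x * b‖ₑ ^ p ∂μ) (b : R) :
    ‖(List.ofFn B).reverse.prod * b‖ₑ ^ p ≤
      c ^ k * ∫⁻ f : Fin k → R, ‖(List.ofFn f).reverse.prod * b‖ₑ ^ p
        ∂(Measure.pi fun _ => μ) := by
  induction k generalizing b with
  | zero => simp
  | succ k ih =>
    let Q (f : Fin k → R) : R := (List.ofFn f).reverse.prod
    have hQ : Continuous Q := continuous_prod_reverse_ofFn k
    have hcont : Continuous fun z : (Fin k → R) × R => ‖Q z.1 * z.2 * b‖ₑ := by fun_prop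
    have hmeas : Measurable fun f : Fin (k + 1) → R => ‖(List.ofFn f).reverse.prod * b‖ₑ ^ p :=
      ((continuous_prod_reverse_ofFn (k + 1)).mul continuous_const).enorm.measurable.pow_const p
    calc ‖(List.ofFn B).reverse.prod * b‖ₑ ^ p = ‖Q (fun i => B i.succ) * (B 0 * b)‖ₑ ^ p := by
          rw [prod_reverse_ofFn_succ, mul_assoc]
      _ ≤ c ^ k * ∫⁻ f, ‖Q f * (B 0 * b)‖ₑ ^ p ∂(Measure.pi fun _ => μ) :=
          ih (fun i => hB i.succ) _
      _ ≤ c ^ k * ∫⁻ f, c * ∫⁻ x, ‖Q f * x * b‖ₑ ^ p ∂μ ∂(Measure.pi fun _ => μ) := by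
          gcongr with f
          simpa only [mul_assoc] using hB 0 (Q f) b
      _ = c ^ (k + 1) * ∫⁻ f, ∫⁻ x, ‖Q f * x * b‖ₑ ^ p ∂μ ∂(Measure.pi fun _ => μ) := by
          rw [lintegral_const_mul _ (hcont.measurable.pow_const p).lintegral_prod_right', pow_succ,
            mul_assoc]
      _ = c ^ (k + 1) * ∫⁻ f : Fin (k + 1) → R, ‖(List.ofFn f).reverse.prod * b‖ₑ ^ p
            ∂(Measure.pi fun _ => μ) := by
          rw [lintegral_pi_fin_succ μ hmeas]
          simp only [prod_reverse_ofFn_succ, Fin.cons_succ, Fin.cons_zero, Q]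

end Products

section WeightedProducts

variable {R : Type*} [NormedRing R] [NormedAlgebra ℝ R] [FiniteDimensional ℝ R]
  [MeasurableSpace R] [BorelSpace R] {μ : Measure R} [IsFiniteMeasure μ]

theorem exists_enorm_mul_mul_pow_le_lintegral (hμ : Integrable id μ) {s : Set R}
    (hs : IsCompact s) (hsμ : s ⊆ μ.support) {W : ℝ≥0} (hW : 1 < W) :
    ∃ H : ℝ≥0, 0 < H ∧ ∀ x ∈ s, ∀ (p : ℕ) (a b : R),
      ‖a * x * b‖ₑ ^ (p + 1) ≤ W ^ p * H * ∫⁻ y, ‖a * y * b‖ₑ ^ (p + 1) ∂μ := by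
  obtain ⟨H, hH⟩ := exists_weight_of_isCompact hμ hs hsμ (sub_pos.2 (NNReal.coe_lt_coe.2 hW))
  refine ⟨H.toNNReal + 1, by positivity, fun x hx p a b => ?_⟩
  obtain ⟨h, rfl, hone, hsup⟩ := hH x hx
  have hone' : ∫⁻ y, ‖h y‖ₑ ∂μ ≤ W := by
    rw [← ofReal_integral_norm_eq_lintegral_enorm (h.integrable μ), ← ENNReal.ofReal_coe_nnreal]
    exact ENNReal.ofReal_le_ofReal (by simpa using hone)
  refine enorm_mul_integral_smul_mul_pow_le h.continuous.measurable.aemeasurable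
    (integrable_boundedContinuous_smul hμ h) hone' (fun y => ?_) p a b
  rw [← ofReal_norm, ENNReal.ofReal, ENNReal.coe_le_coe]
  exact (Real.toNNReal_mono ((h.norm_coe_le_norm y).trans hsup)).trans le_self_add

theorem exists_enorm_prod_pow_le_lintegral (hμ : Integrable id μ) {s : Set R}
    (hs : IsCompact s) (hsμ : s ⊆ μ.support) {W : ℝ≥0} (hW : 1 < W) :
    ∃ H : ℝ≥0, 0 < H ∧ ∀ {p : ℕ}, p ≠ 0 → ∀ {k : ℕ} {B : Fin k → R}, (∀ i, B i ∈ s) →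
      ‖(List.ofFn B).reverse.prod‖ₑ ^ p ≤ (W ^ p * H) ^ k *
        ∫⁻ f : Fin k → R, ‖(List.ofFn f).reverse.prod‖ₑ ^ p ∂(Measure.pi fun _ => μ) := by
  obtain ⟨H, hH_pos, hH⟩ := exists_enorm_mul_mul_pow_le_lintegral hμ hs hsμ hW
  refine ⟨H, hH_pos, fun {p} hp {k} {B} hB => ?_⟩
  obtain ⟨q, rfl⟩ := Nat.exists_eq_succ_of_ne_zero hp
  have hfactor (i : Fin k) (a b : R) : ‖a * B i * b‖ₑ ^ (q + 1) ≤
      W ^ (q + 1) * H * ∫⁻ x, ‖a * x * b‖ₑ ^ (q + 1) ∂μ := by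
    refine (hH _ (hB i) q a b).trans ?_
    gcongr
    · exact_mod_cast hW.le
    · exact q.le_succ
  simpa only [mul_one] using enorm_prod_mul_pow_le_lintegral hfactor 1

end WeightedProducts

section Matrices

variable {n : ℕ}

instance matBorelSpace : BorelSpace (Mat n) :=
  inferInstanceAs (BorelSpace (Fin n → Fin n → ℝ))

theorem opNorm_eq_norm (A : Mat n) : opNorm A = ‖A‖ := rfl

theorem opNorm_nonneg (A : Mat n) : 0 ≤ opNorm A := norm_nonneg A

theorem opNorm_mul_le (A B : Mat n) : opNorm (A * B) ≤ opNorm A * opNorm B :=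
  Matrix.l2_opNorm_mul A B

theorem opNorm_one_le : opNorm (1 : Mat n) ≤ 1 :=
  ContinuousLinearMap.opNorm_le_bound _ zero_le_one fun x => by simp

theorem opNorm_prodRev_le {C : ℝ} (hC : 0 ≤ C) {k : ℕ} {f : Fin k → Mat n}
    (hf : ∀ i, opNorm (f i) ≤ C) : opNorm (prodRev f) ≤ C ^ k := by
  induction k with
  | zero => simpa [prodRev] using opNorm_one_le
  | succ k ih =>
    rw [prodRev, prod_reverse_ofFn_succ, pow_succ]
    exact (opNorm_mul_le _ _).trans
      (mul_le_mul (ih fun i => hf i.succ) (hf 0) (opNorm_nonneg _) (by positivity))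

theorem msupport_eq_support (μ : Measure (Mat n)) : msupport μ = μ.support := by
  ext A
  rw [(Metric.nhds_basis_ball (x := A)).mem_measureSupport]
  simp only [msupport, Set.mem_ofPred_eq, pos_iff_ne_zero, Metric.ball, dist_eq_norm,
    opNorm_eq_norm]

theorem ae_mem_msupport (μ : Measure (Mat n)) : ∀ᵐ A ∂μ, A ∈ msupport μ := by
  rw [msupport_eq_support]
  exact Measure.support_mem_ae

theorem ae_pi_mem_msupport (μ : Measure (Mat n)) [SigmaFinite μ] (k : ℕ) :
    ∀ᵐ f ∂(Measure.pi fun _ : Fin k => μ), ∀ i, f i ∈ msupport μ :=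
  ae_all_iff.2 fun i =>
    (Measure.quasiMeasurePreserving_eval (fun _ : Fin k => μ) i).ae (ae_mem_msupport μ)

theorem HasBoundedSupport.isCompact_msupport {μ : Measure (Mat n)} (hμ : HasBoundedSupport μ) :
    IsCompact (msupport μ) := by
  have : ProperSpace (Mat n) := FiniteDimensional.proper ℝ _
  obtain ⟨C, hC⟩ := hμ
  refine Metric.isCompact_of_isClosed_isBounded ?_ (isBounded_iff_forall_norm_le.2 ⟨C, hC⟩)
  rw [msupport_eq_support]
  exact Measure.isClosed_support

theorem HasBoundedSupport.integrable_id {μ : Measure (Mat n)} [IsFiniteMeasure μ]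
    (hμ : HasBoundedSupport μ) : Integrable id μ := by
  obtain ⟨C, hC⟩ := hμ
  exact .of_bound continuous_id.aestronglyMeasurable C ((ae_mem_msupport μ).mono hC)

end Matrices

section Radii

variable {n : ℕ}

/-- The largest norm of a product of `k` matrices from `M`; `jsr M` is the `limsup` of its
`k`-th roots. It takes the junk value `0` if `M` is empty and `k ≠ 0`, or if the norms of the
products are unbounded. -/
def supProdNorm (M : Set (Mat n)) (k : ℕ) : ℝ :=
  sSup {x : ℝ | ∃ f : Fin k → Mat n, (∀ i, f i ∈ M) ∧ x = opNorm (prodRev f)}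

theorem supProdNorm_nonneg (M : Set (Mat n)) (k : ℕ) : 0 ≤ supProdNorm M k := by
  refine Real.sSup_nonneg ?_
  rintro _ ⟨f, -, rfl⟩
  exact opNorm_nonneg _

theorem supProdNorm_le {M : Set (Mat n)} {k : ℕ} {c : ℝ} (hc : 0 ≤ c)
    (h : ∀ f : Fin k → Mat n, (∀ i, f i ∈ M) → opNorm (prodRev f) ≤ c) :
    supProdNorm M k ≤ c := by
  refine Real.sSup_le ?_ hc
  rintro _ ⟨f, hf, rfl⟩
  exact h f hf

variable {μ : Measure (Mat n)}

theorem HasBoundedSupport.exists_opNorm_prodRev_le (hμ : HasBoundedSupport μ) :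
    ∃ C : ℝ, 0 ≤ C ∧ ∀ {k : ℕ} {f : Fin k → Mat n}, (∀ i, f i ∈ msupport μ) →
      opNorm (prodRev f) ≤ C ^ k := by
  obtain ⟨C, hC⟩ := hμ
  exact ⟨max C 0, le_max_right _ _, fun hf =>
    opNorm_prodRev_le (le_max_right _ _) fun i => (hC _ (hf i)).trans (le_max_left _ _)⟩

theorem HasBoundedSupport.opNorm_prodRev_le_supProdNorm (hμ : HasBoundedSupport μ) {k : ℕ}
    {f : Fin k → Mat n} (hf : ∀ i, f i ∈ msupport μ) :
    opNorm (prodRev f) ≤ supProdNorm (msupport μ) k := by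
  obtain ⟨C, -, hC⟩ := hμ.exists_opNorm_prodRev_le
  refine le_csSup ⟨C ^ k, ?_⟩ ⟨f, hf, rfl⟩
  rintro _ ⟨g, hg, rfl⟩
  exact hC hg

theorem HasBoundedSupport.isBoundedUnder_supProdNorm_rpow (hμ : HasBoundedSupport μ) :
    IsBoundedUnder (· ≤ ·) atTop fun k : ℕ =>
      supProdNorm (msupport μ) k ^ ((1 : ℝ) / k) := by
  obtain ⟨C, hC_nonneg, hC⟩ := hμ.exists_opNorm_prodRev_le
  refine ⟨C, eventually_map.2 ?_⟩
  filter_upwards [eventually_ne_atTop 0] with k hk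
  calc supProdNorm (msupport μ) k ^ ((1 : ℝ) / k) ≤ (C ^ k) ^ ((1 : ℝ) / k) :=
        Real.rpow_le_rpow (supProdNorm_nonneg _ k)
          (supProdNorm_le (by positivity) fun _ => hC) (by positivity)
    _ = C := by rw [one_div, Real.pow_rpow_inv_natCast hC_nonneg hk]

theorem kExpNorm_nonneg (μ : Measure (Mat n)) (p k : ℕ) : 0 ≤ kExpNorm μ p k :=
  integral_nonneg fun _ => pow_nonneg (opNorm_nonneg _) p

theorem kExpNorm_rpow_nonneg (μ : Measure (Mat n)) (p k : ℕ) :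
    0 ≤ kExpNorm μ p k ^ (1 / (p * k : ℝ)) :=
  Real.rpow_nonneg (kExpNorm_nonneg μ p k) _

variable [IsProbabilityMeasure μ]

theorem HasBoundedSupport.ae_opNorm_prodRev_pow_le (hμ : HasBoundedSupport μ) (p k : ℕ) :
    ∀ᵐ f ∂(Measure.pi fun _ : Fin k => μ),
      opNorm (prodRev f) ^ p ≤ supProdNorm (msupport μ) k ^ p := by
  filter_upwards [ae_pi_mem_msupport μ k] with f hf
  exact pow_le_pow_left₀ (opNorm_nonneg _) (hμ.opNorm_prodRev_le_supProdNorm hf) p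

theorem HasBoundedSupport.integrable_opNorm_prodRev_pow (hμ : HasBoundedSupport μ) (p k : ℕ) :
    Integrable (fun f : Fin k → Mat n => opNorm (prodRev f) ^ p) (Measure.pi fun _ => μ) := by
  have hcont : Continuous fun f : Fin k → Mat n => opNorm (prodRev f) ^ p :=
    (continuous_prod_reverse_ofFn k).norm.pow p
  refine .of_bound hcont.aestronglyMeasurable (supProdNorm (msupport μ) k ^ p) ?_
  filter_upwards [hμ.ae_opNorm_prodRev_pow_le p k] with f hf
  rwa [Real.norm_of_nonneg (pow_nonneg (opNorm_nonneg _) p)]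

theorem HasBoundedSupport.ofReal_kExpNorm (hμ : HasBoundedSupport μ) (p k : ℕ) :
    ENNReal.ofReal (kExpNorm μ p k) =
      ∫⁻ f : Fin k → Mat n, ‖prodRev f‖ₑ ^ p ∂(Measure.pi fun _ => μ) := by
  rw [kExpNorm, ofReal_integral_eq_lintegral_ofReal (hμ.integrable_opNorm_prodRev_pow p k)
    (Eventually.of_forall fun _ => pow_nonneg (opNorm_nonneg _) p)]
  simp only [opNorm_eq_norm, ENNReal.ofReal_pow (norm_nonneg _), ofReal_norm]

theorem HasBoundedSupport.kExpNorm_rpow_le (hμ : HasBoundedSupport μ) {p : ℕ} (hp : p ≠ 0)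
    (k : ℕ) :
    kExpNorm μ p k ^ (1 / (p * k : ℝ)) ≤ supProdNorm (msupport μ) k ^ ((1 : ℝ) / k) := by
  have hs := supProdNorm_nonneg (msupport μ) k
  have hle : kExpNorm μ p k ≤ supProdNorm (msupport μ) k ^ p := by
    simpa [kExpNorm] using integral_mono_ae (hμ.integrable_opNorm_prodRev_pow p k)
      (integrable_const _) (hμ.ae_opNorm_prodRev_pow_le p k)
  calc kExpNorm μ p k ^ (1 / (p * k : ℝ))
      ≤ (supProdNorm (msupport μ) k ^ p) ^ (1 / (p * k : ℝ)) :=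
        Real.rpow_le_rpow (kExpNorm_nonneg μ p k) hle (by positivity)
    _ = supProdNorm (msupport μ) k ^ ((1 : ℝ) / k) := by
        rw [← Real.rpow_natCast, ← Real.rpow_mul hs]
        congr 1
        field_simp

theorem HasBoundedSupport.pRadius_le_jsr (hμ : HasBoundedSupport μ) {p : ℕ} (hp : p ≠ 0) :
    pRadius μ p ≤ jsr (msupport μ) :=
  limsup_le_limsup (Eventually.of_forall (hμ.kExpNorm_rpow_le hp))
    (isCoboundedUnder_le_of_le atTop (kExpNorm_rpow_nonneg μ p))
    hμ.isBoundedUnder_supProdNorm_rpow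

theorem HasBoundedSupport.exists_opNorm_prodRev_pow_le (hμ : HasBoundedSupport μ) {W : ℝ≥0}
    (hW : 1 < W) :
    ∃ H : ℝ≥0, 0 < H ∧ ∀ {p : ℕ}, p ≠ 0 → ∀ {k : ℕ} {f : Fin k → Mat n},
      (∀ i, f i ∈ msupport μ) → opNorm (prodRev f) ^ p ≤ (W ^ p * H) ^ k * kExpNorm μ p k := by
  obtain ⟨H, hH_pos, hH⟩ := exists_enorm_prod_pow_le_lintegral hμ.integrable_id
    hμ.isCompact_msupport (msupport_eq_support μ).subset hW
  refine ⟨H, hH_pos, fun {p} hp {k} {f} hf => ?_⟩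
  have hle : ‖prodRev f‖ₑ ^ p ≤ (W ^ p * H) ^ k * ENNReal.ofReal (kExpNorm μ p k) := by
    rw [hμ.ofReal_kExpNorm]
    exact hH hp hf
  rw [← ENNReal.ofReal_le_ofReal_iff (mul_nonneg (by positivity) (kExpNorm_nonneg μ p k)),
    ENNReal.ofReal_mul (by positivity), ENNReal.ofReal_pow (opNorm_nonneg _), opNorm_eq_norm,
    ofReal_norm]
  convert hle using 2
  norm_cast
  exact ENNReal.ofReal_coe_nnreal

theorem supProdNorm_rpow_le_of_forall {M : Set (Mat n)} {p k : ℕ} (hp : p ≠ 0) (hk : k ≠ 0)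
    {W H E : ℝ} (hW : 0 ≤ W) (hH : 0 ≤ H) (hE : 0 ≤ E)
    (h : ∀ f : Fin k → Mat n, (∀ i, f i ∈ M) → opNorm (prodRev f) ^ p ≤ (W ^ p * H) ^ k * E) :
    supProdNorm M k ^ ((1 : ℝ) / k) ≤ W * H ^ ((1 : ℝ) / p) * E ^ (1 / (p * k : ℝ)) := by
  set r := W * H ^ ((1 : ℝ) / p) * E ^ (1 / (p * k : ℝ)) with hr
  have hr_nonneg : 0 ≤ r := by positivity
  have hpow : (r ^ k) ^ p = (W ^ p * H) ^ k * E := by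
    have hHp : (H ^ ((1 : ℝ) / p)) ^ p = H := by rw [one_div, Real.rpow_inv_natCast_pow hH hp]
    have hEpk : (E ^ (1 / (p * k : ℝ))) ^ (p * k) = E := by
      rw [← Nat.cast_mul, one_div, Real.rpow_inv_natCast_pow hE (mul_ne_zero hp hk)]
    rw [← pow_mul, mul_comm k p, hr, mul_pow, hEpk, pow_mul, mul_pow, hHp]
  rw [one_div, Real.rpow_inv_le_iff_of_pos (supProdNorm_nonneg M k) hr_nonneg (by positivity),
    Real.rpow_natCast]
  refine supProdNorm_le (by positivity) fun f hf => ?_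
  exact le_of_pow_le_pow_left₀ hp (by positivity) ((h f hf).trans_eq hpow.symm)

theorem HasBoundedSupport.exists_jsr_le (hμ : HasBoundedSupport μ) {W : ℝ≥0} (hW : 1 < W) :
    ∃ H : ℝ≥0, 0 < H ∧ ∀ {p : ℕ}, p ≠ 0 →
      jsr (msupport μ) ≤ W * H ^ ((1 : ℝ) / p) * pRadius μ p := by
  obtain ⟨H, hH_pos, hH⟩ := hμ.exists_opNorm_prodRev_pow_le hW
  refine ⟨H, hH_pos, fun {p} hp => ?_⟩
  set c : ℝ := W * H ^ ((1 : ℝ) / p)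
  have hc : 0 ≤ c := by positivity
  have hbdd : IsBoundedUnder (· ≤ ·) atTop fun k : ℕ => kExpNorm μ p k ^ (1 / (p * k : ℝ)) :=
    hμ.isBoundedUnder_supProdNorm_rpow.mono_le (Eventually.of_forall (hμ.kExpNorm_rpow_le hp))
  have hcobdd : IsCoboundedUnder (· ≤ ·) atTop fun k : ℕ => kExpNorm μ p k ^ (1 / (p * k : ℝ)) :=
    isCoboundedUnder_le_of_le atTop (kExpNorm_rpow_nonneg μ p)
  have hmono : Monotone (c * · : ℝ → ℝ) := monotone_mul_left_of_nonneg hc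
  calc jsr (msupport μ) ≤ limsup (fun k : ℕ => c * kExpNorm μ p k ^ (1 / (p * k : ℝ))) atTop := by
        refine limsup_le_limsup ?_ (isCoboundedUnder_le_of_le atTop fun k =>
          Real.rpow_nonneg (supProdNorm_nonneg _ k) _) (hbdd.comp hmono)
        filter_upwards [eventually_ne_atTop 0] with k hk
        exact supProdNorm_rpow_le_of_forall hp hk W.coe_nonneg H.coe_nonneg
          (kExpNorm_nonneg μ p k) fun f hf => hH hp hf
    _ = c * pRadius μ p :=
        (hmono.map_limsup_of_continuousAt _ (by fun_prop) hbdd hcobdd).symm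

end Radii

theorem stmt0_general (n : ℕ) (μ : Measure (Mat n)) [IsProbabilityMeasure μ]
    (hbdd : HasBoundedSupport μ) :
    Tendsto (fun p : ℕ => pRadius μ p) atTop (𝓝 (jsr (msupport μ))) := by
  refine tendsto_order.2 ⟨fun a ha => ?_, fun a ha => ?_⟩
  · obtain ⟨W, hW, hWa⟩ : ∃ W : ℝ≥0, 1 < W ∧ W * a < jsr (msupport μ) := by
      have hlim : Tendsto (fun W : ℝ≥0 => (W : ℝ) * a) (𝓝[>] 1) (𝓝 a) :=
        tendsto_nhdsWithin_of_tendsto_nhds (Continuous.tendsto' (by fun_prop) _ _ (by simp))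
      exact (eventually_mem_nhdsWithin.and (hlim.eventually_lt_const ha)).exists
    obtain ⟨H, hH, hjsr⟩ := hbdd.exists_jsr_le hW
    have hroot : Tendsto (fun p : ℕ => (W : ℝ) * H ^ ((1 : ℝ) / p) * a) atTop (𝓝 (W * a)) := by
      have hH_root : Tendsto (fun p : ℕ => (H : ℝ) ^ ((1 : ℝ) / p)) atTop (𝓝 1) := by
        simpa using tendsto_const_nhds.rpow tendsto_one_div_atTop_nhds_zero_nat
          (Or.inl (NNReal.coe_ne_zero.2 hH.ne'))
      simpa using (hH_root.const_mul (W : ℝ)).mul_const a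
    filter_upwards [hroot.eventually_lt_const hWa, eventually_ne_atTop 0] with p hlt hp
    exact lt_of_mul_lt_mul_left (hlt.trans_le (hjsr hp)) (by positivity)
  · filter_upwards [eventually_ne_atTop 0] with p hp
    exact (hbdd.pRadius_le_jsr hp).trans_lt ha

/-- For a Borel probability measure `μ` on real `n × n` matrices with bounded
support whose support leaves a proper cone invariant (A2) and whose singular part w.r.t.
Lebesgue measure is zero or a finite combination of Dirac measures (A3), the joint spectral
radius of the support of `μ` is the limit as `p → ∞` of the `p`-radius of `μ`. -/
theorem stmt0 (n : ℕ) (hn : 1 ≤ n) (μ : Measure (Mat n)) [IsProbabilityMeasure μ]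
    (hbdd : HasBoundedSupport μ)
    (K : Set (EucSp n)) (hK : IsProperCone K) (hinv : SetLeavesInv (msupport μ) K)
    (hsing : IsFiniteDiracComb (μ.singularPart (matLebesgue n))) :
    Tendsto (fun p : ℕ => pRadius μ p) atTop (𝓝 (jsr (msupport μ))) :=
  stmt0_general n μ hbdd

end
end

section
/- Let n ≥ 1, let M₁, …, M_N ∈ ℝ^{n×n}, let p₁, …, p_N be positive reals summing to 1, and let μ = p₁ δ_{M₁} + ⋯ + p_N δ_{M_N} be the corresponding finitely supported probability measure on ℝ^{n×n}. Let A be a random matrix with law μ and let M = supp μ = {M₁, …, M_N}. Then ρ̂(M) = lim_{p→∞} ρ(E[A^{⊗(2p)}])^{1/(2p)}, where the limit is over positive integers p. -/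
open MeasureTheory Filter Topology
open scoped ENNReal RealInnerProductSpace

noncomputable section

/-!
Give matrices the Frobenius norm, whose inner product is `tr (Aᵀ B)`. Kronecker powers satisfy
`tr ((A^{⊗q})ᵀ B^{⊗q}) = tr (Aᵀ B) ^ q`, so `‖A^{⊗q}‖ = ‖A‖ ^ q`, and for even `q` the matrices
`A^{⊗q}` have pairwise nonnegative inner products: a nonnegative combination of them is at least as
long as each of its terms. Expanding the `k`-th power of `E = ∑ wᵢ Mᵢ^{⊗q}` over words of length `k`
therefore gives, with `v = min wᵢ`, `W = ∑ wᵢ` and `sₖ` the largest norm of a product of length `k`,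
`vᵏ sₖ^q ≤ ‖Eᵏ‖ ≤ n^{q/2} Wᵏ sₖ^q`. By Gelfand's formula `v ρ̂^q ≤ ρ(E) ≤ W ρ̂^q`; now take `q`-th
roots and let `q → ∞`.
-/

section Roots

variable {ι : Type*} {l : Filter ι}

lemma tendsto_const_rpow_one_div {c : ℝ} (hc : 0 < c) {k : ι → ℕ} (hk : Tendsto k l atTop) :
    Tendsto (fun i => c ^ (1 / (k i : ℝ))) l (𝓝 1) := by
  simpa using tendsto_const_nhds.rpow
    ((tendsto_one_div_atTop_nhds_zero_nat (𝕜 := ℝ)).comp hk) (Or.inl hc.ne')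

lemma mul_pow_rpow_one_div {c x : ℝ} (hc : 0 ≤ c) (hx : 0 ≤ x) {k : ℕ} (hk : k ≠ 0) :
    (c * x ^ k) ^ (1 / k : ℝ) = c ^ (1 / k : ℝ) * x := by
  rw [Real.mul_rpow hc (pow_nonneg hx k), one_div, Real.pow_rpow_inv_natCast hx hk]

lemma tendsto_rpow_one_div_of_mul_pow_le {a : ι → ℝ} {c C x : ℝ} (hc : 0 < c) (hC : 0 < C)
    (hx : 0 ≤ x) {k : ι → ℕ} (hk : Tendsto k l atTop) (hlower : ∀ᶠ i in l, c * x ^ k i ≤ a i)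
    (hupper : ∀ᶠ i in l, a i ≤ C * x ^ k i) :
    Tendsto (fun i => a i ^ (1 / (k i : ℝ))) l (𝓝 x) := by
  have hlim {b : ℝ} (hb : 0 < b) : Tendsto (fun i => b ^ (1 / (k i : ℝ)) * x) l (𝓝 x) := by
    simpa using (tendsto_const_rpow_one_div hb hk).mul_const x
  refine tendsto_of_tendsto_of_tendsto_of_le_of_le' (hlim hc) (hlim hC) ?_ ?_
  · filter_upwards [hlower, hk.eventually_ne_atTop 0] with i hi hk0
    rw [← mul_pow_rpow_one_div hc.le hx hk0]
    gcongr
  · filter_upwards [hlower, hupper, hk.eventually_ne_atTop 0] with i hi hi' hk0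
    have ha : 0 ≤ a i := le_trans (by positivity) hi
    rw [← mul_pow_rpow_one_div hC.le hx hk0]
    gcongr

lemma isBoundedUnder_le_of_pow {r : ι → ℝ} {q : ℕ} (hq : q ≠ 0)
    (h : IsBoundedUnder (· ≤ ·) l fun i => r i ^ q) : IsBoundedUnder (· ≤ ·) l r := by
  obtain ⟨C, hC⟩ := h.eventually_le
  refine ⟨max 1 C, eventually_map.mpr <| hC.mono fun i hi => ?_⟩
  obtain h1 | h1 := le_total (r i) 1
  · exact h1.trans (le_max_left 1 C)
  · exact (le_self_pow₀ h1 hq).trans (hi.trans (le_max_right 1 C))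

lemma limsup_pow_of_nonneg [l.NeBot] {r : ι → ℝ} (hr : ∀ i, 0 ≤ r i)
    (hbdd : IsBoundedUnder (· ≤ ·) l r) (q : ℕ) :
    limsup (fun i => r i ^ q) l = limsup r l ^ q := by
  have hcobdd : IsCoboundedUnder (· ≤ ·) l r := isCoboundedUnder_le_of_le l hr
  have hlimsup : 0 ≤ limsup r l := le_limsup_of_frequently_le (Frequently.of_forall hr) hbdd
  have hmono : Monotone fun x : ℝ => max x 0 ^ q := fun x y hxy => by dsimp only; gcongr
  have h := hmono.map_limsup_of_continuousAt r (by fun_prop) hbdd hcobdd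
  simpa [Function.comp_def, max_eq_left (hr _), max_eq_left hlimsup] using h.symm

end Roots

section GrowthRate

/-- The exponential growth rate `limsup sₖ^(1/k)` of a sequence of nonnegative reals. -/
def growthRate (s : ℕ → ℝ) : ℝ :=
  limsup (fun k : ℕ => s k ^ (1 / k : ℝ)) atTop

variable {s G : ℕ → ℝ} {a c ρ : ℝ} {q : ℕ}

lemma growthRate_nonneg (hs : ∀ k, 0 ≤ s k) : 0 ≤ growthRate s := by
  rw [growthRate, limsup_eq]
  refine Real.sInf_nonneg fun b hb => ?_
  obtain ⟨k, hk⟩ := Eventually.exists hb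
  exact (Real.rpow_nonneg (hs k) _).trans hk

lemma mul_pow_mul_pow_rpow_one_div {x : ℝ} (hc : 0 ≤ c) (ha : 0 ≤ a) (hx : 0 ≤ x) {k : ℕ}
    (hk : k ≠ 0) :
    (c * a ^ k * x ^ q) ^ (1 / k : ℝ) = c ^ (1 / k : ℝ) * a * (x ^ (1 / k : ℝ)) ^ q := by
  rw [Real.mul_rpow (by positivity) (by positivity), mul_pow_rpow_one_div hc ha hk,
    Real.rpow_pow_comm hx]

lemma eventually_rpow_one_div_pow_le (hs : ∀ k, 0 ≤ s k) (ha : 0 < a)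
    (hsG : ∀ k, a ^ k * s k ^ q ≤ G k) :
    ∀ᶠ k : ℕ in atTop, (s k ^ (1 / k : ℝ)) ^ q ≤ G k ^ (1 / k : ℝ) / a := by
  filter_upwards [eventually_ne_atTop 0] with k hk
  have hroot := mul_pow_mul_pow_rpow_one_div (q := q) zero_le_one ha.le (hs k) hk
  simp only [one_mul, Real.one_rpow] at hroot
  have := hs k
  rw [le_div_iff₀' ha, ← hroot]
  gcongr
  exact hsG k

variable (hG : Tendsto (fun k : ℕ => G k ^ (1 / k : ℝ)) atTop (𝓝 ρ))
include hG

lemma isBoundedUnder_rpow_one_div (hs : ∀ k, 0 ≤ s k) (ha : 0 < a) (hq : q ≠ 0)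
    (hsG : ∀ k, a ^ k * s k ^ q ≤ G k) :
    IsBoundedUnder (· ≤ ·) atTop fun k : ℕ => s k ^ (1 / k : ℝ) :=
  isBoundedUnder_le_of_pow hq <|
    (hG.div_const a).isBoundedUnder_le.mono_le (eventually_rpow_one_div_pow_le hs ha hsG)

lemma mul_growthRate_pow_le (hs : ∀ k, 0 ≤ s k) (ha : 0 < a) (hq : q ≠ 0)
    (hsG : ∀ k, a ^ k * s k ^ q ≤ G k) : a * growthRate s ^ q ≤ ρ := by
  have hr (k : ℕ) : 0 ≤ s k ^ (1 / k : ℝ) := Real.rpow_nonneg (hs k) _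
  rw [← le_div_iff₀' ha, growthRate,
    ← limsup_pow_of_nonneg hr (isBoundedUnder_rpow_one_div hG hs ha hq hsG)]
  have hlim := hG.div_const a
  calc limsup (fun k : ℕ => (s k ^ (1 / k : ℝ)) ^ q) atTop
      ≤ limsup (fun k : ℕ => G k ^ (1 / k : ℝ) / a) atTop :=
        limsup_le_limsup (eventually_rpow_one_div_pow_le hs ha hsG)
          (isCoboundedUnder_le_of_le atTop fun k => pow_nonneg (hr k) q) hlim.isBoundedUnder_le
    _ = ρ / a := hlim.limsup_eq

lemma le_mul_growthRate_pow (hs : ∀ k, 0 ≤ s k) (hG0 : ∀ k, 0 ≤ G k) (hc : 0 < c) (ha : 0 < a)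
    (hbdd : IsBoundedUnder (· ≤ ·) atTop fun k : ℕ => s k ^ (1 / k : ℝ))
    (hGs : ∀ k, G k ≤ c * a ^ k * s k ^ q) : ρ ≤ a * growthRate s ^ q := by
  have hr (k : ℕ) : 0 ≤ s k ^ (1 / k : ℝ) := Real.rpow_nonneg (hs k) _
  have hlim : Tendsto (fun k : ℕ => G k ^ (1 / k : ℝ) / (c ^ (1 / k : ℝ) * a)) atTop
      (𝓝 (ρ / a)) := by
    have hdenom := (tendsto_const_rpow_one_div hc tendsto_id).mul_const a
    rw [one_mul] at hdenom
    exact hG.div hdenom ha.ne'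
  have hle : ∀ᶠ k : ℕ in atTop,
      G k ^ (1 / k : ℝ) / (c ^ (1 / k : ℝ) * a) ≤ (s k ^ (1 / k : ℝ)) ^ q := by
    filter_upwards [eventually_ne_atTop 0] with k hk
    rw [div_le_iff₀' (by positivity), ← mul_pow_mul_pow_rpow_one_div hc.le ha.le (hs k) hk]
    have := hG0 k
    gcongr
    exact hGs k
  have hbdd_pow : IsBoundedUnder (· ≤ ·) atTop fun k : ℕ => (s k ^ (1 / k : ℝ)) ^ q := by
    obtain ⟨C, hC⟩ := hbdd.eventually_le
    exact ⟨C ^ q, eventually_map.mpr <| hC.mono fun k hk => pow_le_pow_left₀ (hr k) hk q⟩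
  rw [← div_le_iff₀' ha, growthRate, ← limsup_pow_of_nonneg hr hbdd, ← hlim.limsup_eq]
  exact limsup_le_limsup hle hlim.isCoboundedUnder_le hbdd_pow

end GrowthRate

section Products

lemma prodRev_cons {m k : ℕ} (A : Mat m) (f : Fin k → Mat m) :
    prodRev (Fin.cons A f : Fin (k + 1) → Mat m) = prodRev f * A := by
  simp [prodRev, List.ofFn_succ]

variable {ι : Type*} {m : ℕ}

lemma sum_smul_pow_eq_sum_prodRev [Fintype ι] (A : ι → Mat m) (w : ι → ℝ) (k : ℕ) :
    (∑ i, w i • A i) ^ k = ∑ f : Fin k → ι, (∏ t, w (f t)) • prodRev (A ∘ f) := by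
  induction k with
  | zero => simp [prodRev]
  | succ k ih =>
    have hcons (i : ι) (f : Fin k → ι) :
        A ∘ (Fin.cons i f : Fin (k + 1) → ι) = Fin.cons (A i) (A ∘ f) :=
      Fin.comp_cons A i f
    rw [pow_succ, ih, ← (Fin.consEquiv fun _ => ι).sum_comp, Fintype.sum_prod_type_right,
      Finset.sum_mul_sum]
    simp only [Fin.consEquiv, Equiv.coe_fn_mk, hcons, prodRev_cons, Fin.prod_univ_succ,
      Fin.cons_zero, Fin.cons_succ, smul_mul_smul_comm, mul_comm (w _)]

/-- The largest operator norm `sup ‖A_k ⋯ A₁‖` of a product of `k` matrices from `M`. -/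
def supOpNorm (M : Set (Mat m)) (k : ℕ) : ℝ :=
  sSup {x : ℝ | ∃ f : Fin k → Mat m, (∀ i, f i ∈ M) ∧ x = opNorm (prodRev f)}

lemma jsr_eq_growthRate_supOpNorm (M : Set (Mat m)) : jsr M = growthRate (supOpNorm M) :=
  rfl

lemma supOpNorm_nonneg (M : Set (Mat m)) (k : ℕ) : 0 ≤ supOpNorm M k :=
  Real.sSup_nonneg <| by rintro _ ⟨f, -, rfl⟩; exact norm_nonneg _

lemma jsr_nonneg (M : Set (Mat m)) : 0 ≤ jsr M :=
  growthRate_nonneg (supOpNorm_nonneg M)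

lemma supOpNorm_range (A : ι → Mat m) (k : ℕ) :
    supOpNorm (Set.range A) k = ⨆ f : Fin k → ι, opNorm (prodRev (A ∘ f)) := by
  rw [supOpNorm, iSup]
  congr 1
  ext x
  constructor
  · rintro ⟨f, hf, rfl⟩
    choose g hg using hf
    exact ⟨g, congrArg (fun f => opNorm (prodRev f)) (funext hg)⟩
  · rintro ⟨f, rfl⟩
    exact ⟨A ∘ f, fun t => Set.mem_range_self (f t), rfl⟩

variable [Finite ι]

lemma opNorm_prodRev_le_supOpNorm (A : ι → Mat m) {k : ℕ} (f : Fin k → ι) :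
    opNorm (prodRev (A ∘ f)) ≤ supOpNorm (Set.range A) k := by
  rw [supOpNorm_range]
  exact le_ciSup (f := fun f : Fin k → ι => opNorm (prodRev (A ∘ f)))
    (Set.finite_range _).bddAbove f

lemma exists_opNorm_prodRev_eq_supOpNorm [Nonempty ι] (A : ι → Mat m) (k : ℕ) :
    ∃ f : Fin k → ι, opNorm (prodRev (A ∘ f)) = supOpNorm (Set.range A) k := by
  rw [supOpNorm_range]
  exact exists_eq_ciSup_of_finite

end Products

section KroneckerPowers

open scoped Kronecker Matrix

variable {m : ℕ}

lemma kronPow_one (p : ℕ) : kronPow (1 : Mat m) p = 1 := by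
  induction p with
  | zero => rfl
  | succ p ih =>
    rw [kronPow, ih, Matrix.one_kronecker_one, Matrix.reindex_apply, Matrix.submatrix_one_equiv]

lemma kronPow_mul (A B : Mat m) (p : ℕ) : kronPow (A * B) p = kronPow A p * kronPow B p := by
  induction p with
  | zero => exact (mul_one (1 : Matrix (Fin (m ^ 0)) (Fin (m ^ 0)) ℝ)).symm
  | succ p ih =>
    simp only [kronPow, ih, Matrix.mul_kronecker_mul, Matrix.reindex_apply,
      Matrix.submatrix_mul_equiv]

lemma transpose_kronPow (A : Mat m) (p : ℕ) : (kronPow A p)ᵀ = kronPow Aᵀ p := by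
  induction p with
  | zero => exact Matrix.transpose_one
  | succ p ih =>
    rw [kronPow, kronPow, Matrix.transpose_reindex, ← ih, Matrix.kroneckerMap_transpose]

lemma trace_reindex_self {ι κ R : Type*} [Fintype ι] [Fintype κ] [AddCommMonoid R] (e : ι ≃ κ)
    (A : Matrix ι ι R) : (Matrix.reindex e e A).trace = A.trace :=
  e.symm.sum_comp A.diag

lemma trace_kronPow (A : Mat m) (p : ℕ) : (kronPow A p).trace = A.trace ^ p := by
  induction p with
  | zero => simp only [kronPow, Matrix.trace_one, Fintype.card_fin, pow_zero, Nat.cast_one]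
  | succ p ih =>
    rw [kronPow, trace_reindex_self, Matrix.trace_kronecker, ih, pow_succ]

lemma trace_transpose_kronPow_mul_kronPow (A B : Mat m) (p : ℕ) :
    ((kronPow A p)ᵀ * kronPow B p).trace = (Aᵀ * B).trace ^ p := by
  rw [transpose_kronPow, ← kronPow_mul, trace_kronPow]

lemma kronPow_prodRev {k : ℕ} (f : Fin k → Mat m) (p : ℕ) :
    kronPow (prodRev f) p = prodRev fun t => kronPow (f t) p := by
  let φ : Mat m →* Mat (m ^ p) :=
    { toFun := (kronPow · p)
      map_one' := kronPow_one p
      map_mul' := (kronPow_mul · · p) }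
  have h := map_list_prod φ (List.ofFn f).reverse
  rwa [List.map_reverse, List.map_ofFn] at h

lemma sum_smul_kronPow_pow {ι : Type*} [Fintype ι] (A : ι → Mat m) (w : ι → ℝ) (p k : ℕ) :
    (∑ i, w i • kronPow (A i) p) ^ k =
      ∑ f : Fin k → ι, (∏ t, w (f t)) • kronPow (prodRev (A ∘ f)) p := by
  simp only [sum_smul_pow_eq_sum_prodRev, kronPow_prodRev, Function.comp_def]

lemma kronExp_sum_dirac {ι : Type*} [Fintype ι] (A : ι → Mat m) {w : ι → ℝ} (hw : ∀ i, 0 ≤ w i)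
    (p : ℕ) :
    kronExp (∑ i, ENNReal.ofReal (w i) • Measure.dirac (A i)) p =
      ∑ i, w i • kronPow (A i) p := by
  have : MeasurableSingletonClass (Mat m) :=
    inferInstanceAs (MeasurableSingletonClass (Fin m → Fin m → ℝ))
  ext a b
  rw [kronExp, Matrix.of_apply, integral_finsetSum_measure fun i _ =>
    (integrable_dirac (by simp)).smul_measure ENNReal.ofReal_ne_top]
  simp [Matrix.sum_apply, integral_smul_measure, ENNReal.toReal_ofReal (hw _)]

end KroneckerPowers

section Frobenius

open scoped Matrix Matrix.Norms.Frobenius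

lemma frobenius_norm_sq {m n : Type*} [Fintype m] [Fintype n] (A : Matrix m n ℝ) :
    ‖A‖ ^ 2 = ∑ i, ∑ j, A i j ^ 2 := by
  rw [Matrix.frobenius_norm_def, ← Real.sqrt_eq_rpow, Real.sq_sqrt (by positivity)]
  simp

lemma frobenius_norm_sq_eq_trace {m n : Type*} [Fintype m] [Fintype n] (A : Matrix m n ℝ) :
    ‖A‖ ^ 2 = (Aᵀ * A).trace := by
  rw [frobenius_norm_sq, Finset.sum_comm]
  simp [Matrix.trace, Matrix.mul_apply, sq]

lemma frobenius_norm_le_norm_sum {ι m n : Type*} [Fintype ι] [Fintype m] [Fintype n]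
    {A : ι → Matrix m n ℝ} (hA : ∀ i j, 0 ≤ ((A i)ᵀ * A j).trace) (i : ι) :
    ‖A i‖ ≤ ‖∑ j, A j‖ := by
  rw [← sq_le_sq₀ (norm_nonneg _) (norm_nonneg _)]
  calc ‖A i‖ ^ 2 = ((A i)ᵀ * A i).trace := frobenius_norm_sq_eq_trace _
    _ ≤ ∑ k, ((A i)ᵀ * A k).trace :=
      Finset.single_le_sum (f := fun k => ((A i)ᵀ * A k).trace) (fun k _ => hA i k)
        (Finset.mem_univ i)
    _ ≤ ∑ j, ∑ k, ((A j)ᵀ * A k).trace :=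
      Finset.single_le_sum (f := fun j => ∑ k, ((A j)ᵀ * A k).trace)
        (fun j _ => Finset.sum_nonneg fun k _ => hA j k) (Finset.mem_univ i)
    _ = ‖∑ j, A j‖ ^ 2 := by
      rw [frobenius_norm_sq_eq_trace, Finset.sum_comm]
      simp only [Matrix.transpose_sum, Matrix.sum_mul, Matrix.mul_sum, Matrix.trace_sum]

variable {m : ℕ}

lemma frobenius_norm_kronPow (A : Mat m) (p : ℕ) : ‖kronPow A p‖ = ‖A‖ ^ p := by
  rw [← sq_eq_sq₀ (norm_nonneg _) (by positivity), frobenius_norm_sq_eq_trace,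
    trace_transpose_kronPow_mul_kronPow, ← frobenius_norm_sq_eq_trace, pow_right_comm]

lemma mul_frobenius_norm_pow_le_norm_sum {ι : Type*} [Fintype ι] (A : ι → Mat m) {w : ι → ℝ}
    (hw : ∀ i, 0 ≤ w i) {q : ℕ} (hq : Even q) (i : ι) :
    w i * ‖A i‖ ^ q ≤ ‖∑ j, w j • kronPow (A j) q‖ := by
  have hterm : w i * ‖A i‖ ^ q = ‖w i • kronPow (A i) q‖ := by
    rw [norm_smul, frobenius_norm_kronPow, Real.norm_of_nonneg (hw i)]
  rw [hterm]
  refine frobenius_norm_le_norm_sum (A := fun j => w j • kronPow (A j) q) (fun j k => ?_) i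
  rw [Matrix.transpose_smul, smul_mul_smul_comm, Matrix.trace_smul,
    trace_transpose_kronPow_mul_kronPow]
  exact mul_nonneg (mul_nonneg (hw j) (hw k)) (hq.pow_nonneg _)

lemma frobenius_norm_sum_smul_kronPow_le {ι : Type*} [Fintype ι] (A : ι → Mat m) {w : ι → ℝ}
    (hw : ∀ i, 0 ≤ w i) {c : ℝ} (hA : ∀ i, ‖A i‖ ≤ c) (q : ℕ) :
    ‖∑ i, w i • kronPow (A i) q‖ ≤ (∑ i, w i) * c ^ q := by
  rw [Finset.sum_mul]
  refine norm_sum_le_of_le _ fun i _ => ?_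
  rw [norm_smul, frobenius_norm_kronPow, Real.norm_of_nonneg (hw i)]
  have := hw i
  gcongr
  exact hA i

lemma opNorm_le_frobenius_norm (A : Mat m) : opNorm A ≤ ‖A‖ := by
  refine ContinuousLinearMap.opNorm_le_bound _ (norm_nonneg A) fun x => ?_
  have h := Matrix.frobenius_norm_mul A (Matrix.replicateCol Unit x.ofLp)
  rwa [← Matrix.replicateCol_mulVec, Matrix.frobenius_norm_replicateCol,
    Matrix.frobenius_norm_replicateCol] at h

lemma frobenius_norm_le_sqrt_mul_opNorm (A : Mat m) : ‖A‖ ≤ √m * opNorm A := by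
  have hcol (j : Fin m) : ∑ i, A i j ^ 2 ≤ opNorm A ^ 2 := by
    have h := (Matrix.toEuclideanLin A).toContinuousLinearMap.le_opNorm
      (EuclideanSpace.single j (1 : ℝ))
    rw [PiLp.norm_single, norm_one, mul_one] at h
    simpa [EuclideanSpace.norm_sq_eq, Matrix.toLpLin_apply, opNorm] using
      pow_le_pow_left₀ (norm_nonneg _) h 2
  have hnonneg : 0 ≤ opNorm A := norm_nonneg _
  rw [← sq_le_sq₀ (norm_nonneg _) (by positivity), frobenius_norm_sq, Finset.sum_comm, mul_pow,
    Real.sq_sqrt (Nat.cast_nonneg m)]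
  simpa using Finset.sum_le_card_nsmul Finset.univ _ _ fun j _ => hcol j

lemma specRad_eq_toReal_spectralRadius (A : Mat m) :
    specRad A = (spectralRadius ℂ (A.map Complex.ofReal)).toReal := by
  rw [specRad, sSup_image', spectralRadius, iSup_subtype', ENNReal.toReal_iSup (by simp)]
  simp

lemma tendsto_frobenius_norm_pow_specRad (A : Mat m) :
    Tendsto (fun k : ℕ => ‖A ^ k‖ ^ (1 / k : ℝ)) atTop (𝓝 (specRad A)) := by
  have hnorm (k : ℕ) : ‖A.map Complex.ofReal ^ k‖ = ‖A ^ k‖ := by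
    rw [← Matrix.frobenius_norm_map_eq (A ^ k) Complex.ofReal Complex.norm_real]
    exact congrArg norm (map_pow Complex.ofRealHom.mapMatrix A k).symm
  rw [specRad_eq_toReal_spectralRadius]
  have hfin : spectralRadius ℂ (A.map Complex.ofReal) ≠ ∞ := by
    refine ne_top_of_le_ne_top ?_
      (spectrum.spectralRadius_le_pow_nnnorm_pow_one_div ℂ (A.map Complex.ofReal) 0)
    finiteness
  refine ((ENNReal.tendsto_toReal hfin).comp
    (spectrum.pow_norm_pow_one_div_tendsto_nhds_spectralRadius _)).congr fun k => ?_
  rw [Function.comp_apply, ENNReal.toReal_ofReal (by positivity), hnorm]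

end Frobenius

section Bounds

open scoped Matrix.Norms.Frobenius

variable {ι : Type*} [Fintype ι] {n : ℕ} (A : ι → Mat n) {w : ι → ℝ}

lemma pow_mul_supOpNorm_pow_le_frobenius_norm [Nonempty ι] {v : ℝ} (hv : 0 ≤ v)
    (hvw : ∀ i, v ≤ w i) {q : ℕ} (hq : Even q) (k : ℕ) :
    v ^ k * supOpNorm (Set.range A) k ^ q ≤ ‖(∑ i, w i • kronPow (A i) q) ^ k‖ := by
  obtain ⟨f, hf⟩ := exists_opNorm_prodRev_eq_supOpNorm A k
  have hw (g : Fin k → ι) : v ^ k ≤ ∏ t, w (g t) := by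
    simpa using Finset.prod_le_prod (s := Finset.univ) (fun _ _ => hv) fun t _ => hvw (g t)
  rw [← hf, sum_smul_kronPow_pow]
  calc v ^ k * opNorm (prodRev (A ∘ f)) ^ q
      ≤ (∏ t, w (f t)) * ‖prodRev (A ∘ f)‖ ^ q :=
        mul_le_mul (hw f) (pow_le_pow_left₀ (norm_nonneg _) (opNorm_le_frobenius_norm _) q)
          (pow_nonneg (norm_nonneg _) q) ((pow_nonneg hv k).trans (hw f))
    _ ≤ _ := mul_frobenius_norm_pow_le_norm_sum (fun g : Fin k → ι => prodRev (A ∘ g))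
        (fun g => (pow_nonneg hv k).trans (hw g)) hq f

lemma frobenius_norm_le_mul_supOpNorm_pow (hw : ∀ i, 0 ≤ w i) (q k : ℕ) :
    ‖(∑ i, w i • kronPow (A i) q) ^ k‖ ≤
      √n ^ q * (∑ i, w i) ^ k * supOpNorm (Set.range A) k ^ q := by
  have hnorm (f : Fin k → ι) : ‖prodRev (A ∘ f)‖ ≤ √n * supOpNorm (Set.range A) k :=
    (frobenius_norm_le_sqrt_mul_opNorm _).trans
      (mul_le_mul_of_nonneg_left (opNorm_prodRev_le_supOpNorm A f) (Real.sqrt_nonneg _))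
  calc ‖(∑ i, w i • kronPow (A i) q) ^ k‖
      ≤ (∑ f : Fin k → ι, ∏ t, w (f t)) * (√n * supOpNorm (Set.range A) k) ^ q := by
        rw [sum_smul_kronPow_pow]
        exact frobenius_norm_sum_smul_kronPow_le _
          (fun f => Finset.prod_nonneg fun t _ => hw (f t)) hnorm q
    _ = √n ^ q * (∑ i, w i) ^ k * supOpNorm (Set.range A) k ^ q := by
        rw [← Fintype.sum_pow, mul_pow]
        ring

lemma specRad_sum_kronPow_bounds [Nonempty ι] (hn : 1 ≤ n) {v : ℝ} (hv : 0 < v)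
    (hvw : ∀ i, v ≤ w i) {q : ℕ} (hq : Even q) (hq0 : q ≠ 0) :
    v * jsr (Set.range A) ^ q ≤ specRad (∑ i, w i • kronPow (A i) q) ∧
      specRad (∑ i, w i • kronPow (A i) q) ≤ (∑ i, w i) * jsr (Set.range A) ^ q := by
  have hw (i : ι) : 0 < w i := hv.trans_le (hvw i)
  have hgelfand := tendsto_frobenius_norm_pow_specRad (∑ i, w i • kronPow (A i) q)
  have hs := supOpNorm_nonneg (Set.range A)
  have hlower := pow_mul_supOpNorm_pow_le_frobenius_norm A hv.le hvw hq
  rw [jsr_eq_growthRate_supOpNorm]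
  exact ⟨mul_growthRate_pow_le hgelfand hs hv hq0 hlower,
    le_mul_growthRate_pow hgelfand hs (fun _ => norm_nonneg _) (by positivity)
      (Finset.sum_pos (fun i _ => hw i) Finset.univ_nonempty)
      (isBoundedUnder_rpow_one_div hgelfand hs hv hq0 hlower)
      (frobenius_norm_le_mul_supOpNorm_pow A (fun i => (hw i).le) q)⟩

end Bounds

theorem stmt2_general {ι : Type*} [Fintype ι] [Nonempty ι] {n : ℕ} (hn : 1 ≤ n) (Ms : ι → Mat n)
    {w : ι → ℝ} (hw : ∀ i, 0 < w i) {μ : Measure (Mat n)}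
    (hμ : μ = ∑ i, ENNReal.ofReal (w i) • Measure.dirac (Ms i)) :
    Tendsto (fun p : ℕ => specRad (kronExp μ (2 * p)) ^ (1 / (2 * p : ℝ))) atTop
      (𝓝 (jsr (Set.range Ms))) := by
  obtain ⟨i₀, hmin⟩ := Finite.exists_min w
  have hbounds {p : ℕ} (hp : p ≠ 0) :=
    specRad_sum_kronPow_bounds Ms hn (hw i₀) hmin (even_two_mul p) (mul_ne_zero two_ne_zero hp)
  have htwo : Tendsto (fun p : ℕ => 2 * p) atTop atTop := tendsto_id.const_mul_atTop' two_pos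
  have hlim := tendsto_rpow_one_div_of_mul_pow_le (hw i₀)
    (Finset.sum_pos (fun i _ => hw i) Finset.univ_nonempty) (jsr_nonneg (Set.range Ms)) htwo
    ((eventually_ne_atTop 0).mono fun _ hp => (hbounds hp).1)
    ((eventually_ne_atTop 0).mono fun _ hp => (hbounds hp).2)
  simpa [hμ, kronExp_sum_dirac Ms fun i => (hw i).le] using hlim

/-- For a finitely supported probability measure `μ = Σ pᵢ δ_{Mᵢ}` (positive
weights summing to 1), `ρ̂({M₁,…,M_N}) = lim_{p→∞} ρ(E[A^{⊗2p}])^{1/(2p)}`. -/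
theorem stmt2 (n N : ℕ) (hn : 1 ≤ n) (Ms : Fin N → Mat n) (w : Fin N → ℝ)
    (hw : ∀ i, 0 < w i) (hsum : ∑ i, w i = 1)
    (μ : Measure (Mat n)) (hμ : μ = ∑ i, ENNReal.ofReal (w i) • Measure.dirac (Ms i)) :
    Tendsto (fun p : ℕ => specRad (kronExp μ (2 * p)) ^ (1 / (2 * p : ℝ))) atTop
      (𝓝 (jsr (Set.range Ms))) := by
  have : Nonempty (Fin N) := by
    by_contra hN
    simp [not_nonempty_iff.mp hN] at hsum
  exact stmt2_general hn Ms hw hμ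

end
end
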